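/- Let ρ be a density matrix with entropy E and spectral constants α and β as in the context, and assume α > 0. Then there exist constants δ < 1, C > 0 and n₀ ∈ ℕ such that for all n ≥ n₀, every density matrix σ on the index type (Fin n → ι) satisfying D(σ, ρ^{⊗n}) ≤ 2(1−δ) has rank σ > C · 2^{nE + α√n}. -/

import Mathlib

/-!
The support projection `P` of `σ` has trace `rank σ` and captures all of `σ`, so it captures mass at
least `1 - D(σ, ρ^{⊗n})` of `ρ^{⊗n}`. On the eigenspaces of `ρ^{⊗n}` with eigenvalue at most `ε` it
captures at most `rank σ * ε`, and on the others at most their whole mass. Hence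
`rank σ * ε ≥ m - D(σ, ρ^{⊗n})`, where `m` is the total mass of the eigenvalues at most `ε`.

The eigenvalues of `ρ^{⊗n}` are the products `p (x 1) ⋯ p (x n)`. When `x` is drawn with these
probabilities, `-log₂` of the product is a sum of `n` i.i.d. variables of mean `E` and standard
deviation `α`. By the central limit theorem it is at least `n E + t α √n` with probability bounded
below for large `n` (if `α = 0` it is almost surely constant), so `m` stays bounded below for
`ε = 2 ^ (-(n E + t α √n))`, and a small enough bound on the distance gives the claim.
-/

open scoped BigOperators Classical ComplexOrder

/-- A density matrix: positive semidefinite with trace one. -/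
def IsDensity {ι : Type*} [Fintype ι] [DecidableEq ι] (ρ : Matrix ι ι ℂ) : Prop :=
  ρ.PosSemidef ∧ ρ.trace = 1

/-- The trace distance `D(ρ,σ) = Tr|ρ−σ|`: the sum of the absolute values of the
eigenvalues of the Hermitian matrix `ρ − σ` (no factor 1/2). -/
noncomputable def traceDist {ι : Type*} [Fintype ι] [DecidableEq ι]
    (ρ σ : Matrix ι ι ℂ) : ℝ :=
  if h : (ρ - σ).IsHermitian then ∑ i, |h.eigenvalues i| else 0

/-- The minimal dimension `𝒮(ρ,δ)` of a `δ`-significant subspace: the minimum rank of an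
orthogonal projection `P` (`P = Pᴴ = P²`) with `Tr(Pρ) ≥ δ`. -/
noncomputable def sigDim {ι : Type*} [Fintype ι] [DecidableEq ι]
    (ρ : Matrix ι ι ℂ) (δ : ℝ) : ℕ :=
  sInf {m : ℕ | ∃ P : Matrix ι ι ℂ,
    P.IsHermitian ∧ P * P = P ∧ δ ≤ ((P * ρ).trace).re ∧ P.rank = m}

/-- The `n`-fold Kronecker power of `ρ`, indexed by `Fin n → ι`. -/
noncomputable def kronPow {ι : Type*} (ρ : Matrix ι ι ℂ) (n : ℕ) :
    Matrix (Fin n → ι) (Fin n → ι) ℂ :=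
  Matrix.of fun i j => ∏ k, ρ (i k) (j k)

/-- The rank-one matrix `|u⟩⟨u|`. -/
noncomputable def outer {ι : Type*} (u : ι → ℂ) : Matrix ι ι ℂ :=
  Matrix.of fun i j => u i * starRingEnd ℂ (u j)

/-- The partial trace over the second subsystem. -/
noncomputable def ptraceB {A B : Type*} [Fintype B]
    (M : Matrix (A × B) (A × B) ℂ) : Matrix A A ℂ :=
  Matrix.of fun a a' => ∑ b, M (a, b) (a', b)

open MeasureTheory ProbabilityTheory Filter Matrix Unitary

section CentralLimit

lemma exists_pos_eventually_le_measureReal_preimage {T E Ω' : Type*} {Ω : T → Type*}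
    {_ : ∀ i, MeasurableSpace (Ω i)} {P : ∀ i, Measure (Ω i)} [∀ i, IsProbabilityMeasure (P i)]
    {_ : MeasurableSpace Ω'} {P' : Measure Ω'} [IsProbabilityMeasure P']
    [TopologicalSpace E] [MeasurableSpace E] [OpensMeasurableSpace E] [HasOuterApproxClosed E]
    {X : ∀ i, Ω i → E} {Z : Ω' → E} {l : Filter T} (h : TendstoInDistribution X l Z P P')
    {G : Set E} (hG : IsOpen G) (hpos : 0 < P' (Z ⁻¹' G)) :
    ∃ c > 0, ∀ᶠ i in l, c ≤ (P i).real (X i ⁻¹' G) := by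
  have hliminf := ProbabilityMeasure.le_liminf_measure_open_of_tendsto h.tendsto hG
  simp only [ProbabilityMeasure.coe_mk,
    Measure.map_apply_of_aemeasurable h.aemeasurable_limit hG.measurableSet,
    fun i => Measure.map_apply_of_aemeasurable (h.forall_aemeasurable i) hG.measurableSet]
    at hliminf
  obtain ⟨c, hc_pos, hc⟩ := ENNReal.lt_iff_exists_nnreal_btwn.mp (hpos.trans_le hliminf)
  refine ⟨c, by exact_mod_cast hc_pos, (eventually_lt_of_lt_liminf hc).mono fun i hi => ?_⟩
  exact ENNReal.toReal_mono (measure_ne_top _ _) hi.le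

lemma gaussianReal_Ioi_pos (m : ℝ) {v : NNReal} (hv : v ≠ 0) (a : ℝ) :
    0 < gaussianReal m v (Set.Ioi a) :=
  have := (gaussianReal_absolutelyContinuous' m hv).isOpenPosMeasure
  Measure.measure_Ioi_pos _ a

lemma exists_pos_eventually_le_measureReal_sum {Ω : Type*} {_ : MeasurableSpace Ω} {P : Measure Ω}
    [IsProbabilityMeasure P] {X : ℕ → Ω → ℝ} (hX : MemLp (X 0) 2 P) (hindep : iIndepFun X P)
    (hident : ∀ k, IdentDistrib (X k) (X 0) P P) (t : ℝ) :
    ∃ c > 0, ∀ᶠ n : ℕ in atTop,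
      c ≤ P.real {ω | n * P[X 0] + t * √(n * Var[X 0; P]) ≤ ∑ k ∈ Finset.range n, X k ω} := by
  obtain hv | hv := eq_or_ne Var[X 0; P] 0
  · have hconst : ∀ᵐ ω ∂P, ∀ k, X k ω = P[X 0] := ae_all_iff.mpr fun k => by
      rw [← (hident k).integral_eq]
      exact ae_eq_integral_of_variance_eq_zero ((hident k).memLp_iff.mpr hX)
        ((hident k).variance_eq.trans hv)
    refine ⟨1, one_pos, .of_forall fun n => ?_⟩
    have hae : ∀ᵐ ω ∂P, n * P[X 0] + t * √(n * Var[X 0; P]) ≤ ∑ k ∈ Finset.range n, X k ω :=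
      hconst.mono fun ω hω => by simp [hω, hv]
    rw [measureReal_congr (eventuallyEq_univ.mpr hae), probReal_univ]
  · have hv_pos : 0 < Var[X 0; P] := (variance_nonneg _ _).lt_of_ne' hv
    obtain ⟨c, hc, hev⟩ := exists_pos_eventually_le_measureReal_preimage
      (tendstoInDistribution_inv_sqrt_mul_sum_sub (Y := id) .id hX hindep hident)
      (isOpen_Ioi (a := t * √Var[X 0; P]))
      (gaussianReal_Ioi_pos 0 (Real.toNNReal_pos.mpr hv_pos).ne' _)
    refine ⟨c, hc, ?_⟩
    filter_upwards [hev, eventually_gt_atTop 0] with n hn hn_pos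
    refine hn.trans (measureReal_mono fun ω hω => ?_)
    have hsqrt : 0 < √(n : ℝ) := Real.sqrt_pos.mpr (by exact_mod_cast hn_pos)
    rw [Set.mem_preimage, Set.mem_Ioi, inv_mul_eq_div, lt_div_iff₀ hsqrt] at hω
    rw [Set.mem_ofPred_eq, Real.sqrt_mul n.cast_nonneg]
    linarith

lemma exists_pos_eventually_le_pi_measureReal_sum {Ω : Type*} {_ : MeasurableSpace Ω}
    {μ : Measure Ω} [IsProbabilityMeasure μ] {f : Ω → ℝ} (hfm : Measurable f) (hf : MemLp f 2 μ)
    (t : ℝ) :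
    ∃ c > 0, ∀ᶠ n : ℕ in atTop,
      c ≤ (Measure.pi fun _ : Fin n => μ).real
        {x | n * μ[f] + t * √(n * Var[f; μ]) ≤ ∑ k, f (x k)} := by
  set P : Measure (ℕ → Ω) := Measure.infinitePi fun _ => μ
  have heval (k : ℕ) : MeasurePreserving (fun ω : ℕ → Ω => ω k) P μ :=
    measurePreserving_eval_infinitePi (fun _ => μ) k
  have hident (k : ℕ) : IdentDistrib (fun ω : ℕ → Ω => f (ω k)) f P μ :=
    (IdentDistrib.mk (heval k).aemeasurable aemeasurable_id
      (by rw [(heval k).map_eq, Measure.map_id])).comp hfm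
  obtain ⟨c, hc, hev⟩ := exists_pos_eventually_le_measureReal_sum
    ((hident 0).memLp_iff.mpr hf) (iIndepFun_infinitePi fun _ => hfm)
    (fun k => (hident k).trans (hident 0).symm) t
  refine ⟨c, hc, hev.mono fun n hn => ?_⟩
  rw [(hident 0).integral_eq, (hident 0).variance_eq] at hn
  rw [← Measure.infinitePi_eq_pi,
    ← Measure.map_infinitePi_infinitePi_of_inj (P := fun _ : ℕ => μ) Fin.val_injective,
    map_measureReal_apply (by fun_prop) (measurableSet_le (by fun_prop) (by fun_prop))]
  simpa only [Finset.sum_range, Set.preimage_ofPred_eq] using hn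

lemma exists_pos_eventually_le_sum_prod {ι : Type*} [Fintype ι] {p : ι → ℝ} (hp : ∀ i, 0 ≤ p i)
    (hp_sum : ∑ i, p i = 1) (f : ι → ℝ) (t : ℝ) :
    ∃ c > 0, ∀ᶠ n : ℕ in atTop,
      c ≤ ∑ x : Fin n → ι with
        n * ∑ i, p i * f i + t * √(n * ∑ i, p i * (f i - ∑ j, p j * f j) ^ 2) ≤ ∑ k, f (x k),
        ∏ k, p (x k) := by
  let _ : MeasurableSpace ι := ⊤
  let μ : Measure ι := (PMF.ofFintype (fun i => ENNReal.ofReal (p i))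
    (by rw [← ENNReal.ofReal_sum_of_nonneg fun i _ => hp i, hp_sum, ENNReal.ofReal_one])).toMeasure
  have hintegral (g : ι → ℝ) : ∫ i, g i ∂μ = ∑ i, p i * g i := by
    simp [μ, PMF.integral_eq_sum, hp]
  have hsingleton (n : ℕ) (x : Fin n → ι) :
      (Measure.pi fun _ : Fin n => μ).real {x} = ∏ k, p (x k) := by
    simp [measureReal_def, μ, ENNReal.toReal_prod, hp]
  obtain ⟨c, hc, hev⟩ :=
    exists_pos_eventually_le_pi_measureReal_sum (μ := μ) (measurable_of_finite f) .of_discrete t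
  refine ⟨c, hc, hev.mono fun n hn => ?_⟩
  rw [variance_eq_integral (measurable_of_finite f).aemeasurable] at hn
  simp only [hintegral] at hn
  simpa only [← hsingleton, sum_measureReal_singleton, Finset.coe_filter_univ] using hn

end CentralLimit

section Entropy

variable {ι : Type*} [Fintype ι]

/-- The Shannon entropy, in bits, of the weights `p`; for the eigenvalues of a density matrix it is
the von Neumann entropy. -/
noncomputable def shannonEntropy (p : ι → ℝ) : ℝ :=
  -∑ i, p i * Real.logb 2 (p i)

/-- The standard deviation of the surprisal `-log₂ (p i)`, whose mean is `shannonEntropy p`, under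
the weights `p`. -/
noncomputable def surprisalStdDev (p : ι → ℝ) : ℝ :=
  √(∑ i, p i * (Real.logb 2 (p i) + shannonEntropy p) ^ 2)

lemma prod_le_two_rpow_neg {T : Type*} [Fintype T] {q : T → ℝ} (hq : ∀ k, 0 ≤ q k) {s : ℝ}
    (hs : s ≤ ∑ k, -Real.logb 2 (q k)) : ∏ k, q k ≤ (2 : ℝ) ^ (-s) := by
  by_cases hzero : ∏ k, q k = 0
  · rw [hzero]
    positivity
  have hpos (k : T) : 0 < q k :=
    (hq k).lt_of_ne' (Finset.prod_ne_zero_iff.mp hzero k (Finset.mem_univ k))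
  calc ∏ k, q k = ∏ k, (2 : ℝ) ^ Real.logb 2 (q k) :=
        Finset.prod_congr rfl fun k _ => (Real.rpow_logb two_pos (by norm_num) (hpos k)).symm
    _ = (2 : ℝ) ^ ∑ k, Real.logb 2 (q k) := (Real.rpow_sum_of_pos two_pos _ _).symm
    _ ≤ (2 : ℝ) ^ (-s) := Real.rpow_le_rpow_of_exponent_le one_le_two <| by
        rw [Finset.sum_neg_distrib] at hs
        linarith

lemma exists_pos_eventually_le_sum_prod_le_two_rpow {p : ι → ℝ} (hp : ∀ i, 0 ≤ p i)
    (hp_sum : ∑ i, p i = 1) (t : ℝ) :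
    ∃ c > 0, ∀ᶠ n : ℕ in atTop,
      c ≤ ∑ x : Fin n → ι with
        ∏ k, p (x k) ≤ (2 : ℝ) ^ (-(n * shannonEntropy p + t * surprisalStdDev p * √n)),
        ∏ k, p (x k) := by
  obtain ⟨c, hc, hev⟩ :=
    exists_pos_eventually_le_sum_prod hp hp_sum (fun i => -Real.logb 2 (p i)) t
  have hmean : ∑ i, p i * -Real.logb 2 (p i) = shannonEntropy p := by
    simp [shannonEntropy]
  have hvar : ∑ i, p i * (-Real.logb 2 (p i) - shannonEntropy p) ^ 2 =
      ∑ i, p i * (Real.logb 2 (p i) + shannonEntropy p) ^ 2 :=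
    Finset.sum_congr rfl fun i _ => by ring
  refine ⟨c, hc, hev.mono fun n hn => hn.trans ?_⟩
  rw [hmean, hvar, Real.sqrt_mul n.cast_nonneg, ← surprisalStdDev, mul_comm √(n : ℝ), ← mul_assoc]
  exact Finset.sum_le_sum_of_subset_of_nonneg
    (Finset.monotone_filter_right _ fun x _ hx => prod_le_two_rpow_neg (fun k => hp (x k)) hx)
    fun x _ _ => Finset.prod_nonneg fun k _ => hp (x k)

end Entropy

section UnitaryConjugation

variable {κ : Type*} [Fintype κ] [DecidableEq κ]

lemma trace_conjStarAlgAut (U : unitaryGroup κ ℂ) (A : Matrix κ κ ℂ) :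
    (conjStarAlgAut ℂ _ U A).trace = A.trace := by
  rw [conjStarAlgAut_apply, trace_mul_cycle, coe_star_mul_self, one_mul]

lemma trace_mul_conjStarAlgAut (U : unitaryGroup κ ℂ) (A B : Matrix κ κ ℂ) :
    (A * conjStarAlgAut ℂ _ U B).trace = (conjStarAlgAut ℂ _ (star U) A * B).trace := by
  rw [conjStarAlgAut_apply, conjStarAlgAut_star_apply, ← mul_assoc, trace_mul_comm]
  simp only [mul_assoc]

lemma posSemidef_conjStarAlgAut (U : unitaryGroup κ ℂ) {A : Matrix κ κ ℂ} (hA : A.PosSemidef) :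
    (conjStarAlgAut ℂ _ U A).PosSemidef :=
  hA.mul_mul_conjTranspose_same _

/-- The Hermitian matrix with eigenvalues `d` along the orthonormal basis formed by the columns of
`U`. Keeping `U` and `d` explicit lets the spectral data of a Kronecker power be read off directly,
without matching it to the sorted list `Matrix.IsHermitian.eigenvalues`. -/
noncomputable def unitaryDiagonal (U : unitaryGroup κ ℂ) (d : κ → ℝ) : Matrix κ κ ℂ :=
  conjStarAlgAut ℂ _ U (diagonal fun i => (d i : ℂ))

lemma unitaryDiagonal_eigenvalues {A : Matrix κ κ ℂ} (hA : A.IsHermitian) :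
    unitaryDiagonal hA.eigenvectorUnitary hA.eigenvalues = A :=
  hA.spectral_theorem.symm

lemma isHermitian_unitaryDiagonal (U : unitaryGroup κ ℂ) (d : κ → ℝ) :
    (unitaryDiagonal U d).IsHermitian :=
  isHermitian_mul_mul_conjTranspose _ <| isHermitian_diagonal_iff.mpr fun i =>
    Complex.conj_ofReal (d i)

lemma unitaryDiagonal_mul_unitaryDiagonal (U : unitaryGroup κ ℂ) (d e : κ → ℝ) :
    unitaryDiagonal U d * unitaryDiagonal U e = unitaryDiagonal U fun i => d i * e i := by
  simp only [unitaryDiagonal, ← map_mul, diagonal_mul_diagonal, Complex.ofReal_mul]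

lemma trace_unitaryDiagonal (U : unitaryGroup κ ℂ) (d : κ → ℝ) :
    (unitaryDiagonal U d).trace = ∑ i, (d i : ℂ) := by
  rw [unitaryDiagonal, trace_conjStarAlgAut, trace_diagonal]

lemma re_trace_mul_unitaryDiagonal (A : Matrix κ κ ℂ) (U : unitaryGroup κ ℂ) (d : κ → ℝ) :
    (A * unitaryDiagonal U d).trace.re =
      ∑ i, (conjStarAlgAut ℂ _ (star U) A i i).re * d i := by
  rw [unitaryDiagonal, trace_mul_conjStarAlgAut, trace, Complex.re_sum]
  simp only [diag_apply, mul_diagonal, Complex.re_mul_ofReal]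

end UnitaryConjugation

section Effect

variable {κ : Type*} [DecidableEq κ] {A P : Matrix κ κ ℂ}

/-- An effect is a matrix `P` with `0 ≤ P ≤ 1` in the Loewner order, that is, a two-outcome quantum
measurement; orthogonal projections are effects. The trace distance bounds how well an effect tells
two states apart. -/
structure IsEffect (P : Matrix κ κ ℂ) : Prop where
  posSemidef : P.PosSemidef
  one_sub_posSemidef : (1 - P).PosSemidef

lemma IsEffect.re_diag_nonneg (hP : IsEffect P) (i : κ) : 0 ≤ (P i i).re :=
  (Complex.le_def.mp hP.posSemidef.diag_nonneg).1

lemma IsEffect.re_diag_le_one (hP : IsEffect P) (i : κ) : (P i i).re ≤ 1 := by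
  simpa using (Complex.le_def.mp (hP.one_sub_posSemidef.diag_nonneg (i := i))).1

variable [Fintype κ]

namespace IsEffect

lemma map_conjStarAlgAut (hP : IsEffect P) (U : unitaryGroup κ ℂ) :
    IsEffect (conjStarAlgAut ℂ _ U P) where
  posSemidef := posSemidef_conjStarAlgAut U hP.posSemidef
  one_sub_posSemidef := by
    simpa only [map_sub, map_one] using posSemidef_conjStarAlgAut U hP.one_sub_posSemidef

lemma re_trace_mul_le_sum_abs_eigenvalues (hP : IsEffect P) (hA : A.IsHermitian) :
    (P * A).trace.re ≤ ∑ i, |hA.eigenvalues i| := by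
  have hQ := hP.map_conjStarAlgAut (star hA.eigenvectorUnitary)
  conv_lhs => rw [← unitaryDiagonal_eigenvalues hA, re_trace_mul_unitaryDiagonal]
  refine Finset.sum_le_sum fun i _ => (le_abs_self _).trans ?_
  rw [abs_mul, abs_of_nonneg (hQ.re_diag_nonneg i)]
  exact mul_le_of_le_one_left (abs_nonneg _) (hQ.re_diag_le_one i)

lemma re_trace_mul_sub_le_traceDist (hP : IsEffect P) {σ τ : Matrix κ κ ℂ} (hσ : σ.IsHermitian)
    (hτ : τ.IsHermitian) : (P * σ).trace.re - (P * τ).trace.re ≤ traceDist σ τ := by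
  rw [← Complex.sub_re, ← trace_sub, ← mul_sub, traceDist, dif_pos (hσ.sub hτ)]
  exact hP.re_trace_mul_le_sum_abs_eigenvalues (hσ.sub hτ)

lemma re_trace_mul_unitaryDiagonal_le (hP : IsEffect P) (U : unitaryGroup κ ℂ) (d : κ → ℝ) {ε : ℝ}
    (hε : 0 ≤ ε) :
    (P * unitaryDiagonal U d).trace.re ≤ P.trace.re * ε + ∑ i with ε < d i, d i := by
  set Q := conjStarAlgAut ℂ _ (star U) P
  have hQ : IsEffect Q := hP.map_conjStarAlgAut (star U)
  have hQ_trace : ∑ i, (Q i i).re = P.trace.re := by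
    rw [← Complex.re_sum, ← trace_conjStarAlgAut (star U) P]
    rfl
  have hterm (i : κ) : (Q i i).re * d i ≤ (Q i i).re * ε + if ε < d i then d i else 0 := by
    have hQi := hQ.re_diag_nonneg i
    split_ifs with hi
    · have := mul_le_of_le_one_left (hε.trans hi.le) (hQ.re_diag_le_one i)
      linarith [mul_nonneg hQi hε]
    · linarith [mul_le_mul_of_nonneg_left (not_lt.mp hi) hQi]
  calc (P * unitaryDiagonal U d).trace.re = ∑ i, (Q i i).re * d i :=
        re_trace_mul_unitaryDiagonal P U d
    _ ≤ ∑ i, ((Q i i).re * ε + if ε < d i then d i else 0) := Finset.sum_le_sum fun i _ => hterm i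
    _ = P.trace.re * ε + ∑ i with ε < d i, d i := by
        rw [Finset.sum_add_distrib, ← Finset.sum_mul, hQ_trace, Finset.sum_filter]

end IsEffect

lemma isEffect_unitaryDiagonal (U : unitaryGroup κ ℂ) {d : κ → ℝ} (hd : ∀ i, d i ∈ Set.Icc 0 1) :
    IsEffect (unitaryDiagonal U d) := by
  refine .map_conjStarAlgAut ⟨.diagonal fun i => ?_, ?_⟩ U
  · exact Complex.zero_le_real.mpr (hd i).1
  · rw [← diagonal_one, diagonal_sub, posSemidef_diagonal_iff]
    intro i
    exact_mod_cast sub_nonneg.mpr (hd i).2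

/-- The orthogonal projection onto the range of the Hermitian matrix `A`: an effect of trace
`A.rank` that captures all of `A`. -/
noncomputable def supportProj (hA : A.IsHermitian) : Matrix κ κ ℂ :=
  unitaryDiagonal hA.eigenvectorUnitary fun i => if hA.eigenvalues i = 0 then 0 else 1

lemma isEffect_supportProj (hA : A.IsHermitian) : IsEffect (supportProj hA) :=
  isEffect_unitaryDiagonal _ fun i => by split_ifs <;> simp

lemma supportProj_mul (hA : A.IsHermitian) : supportProj hA * A = A := by
  have hdiag (a : ℝ) : (if a = 0 then 0 else 1) * a = a := by
    split_ifs with ha <;> simp [ha]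
  calc supportProj hA * A
      = supportProj hA * unitaryDiagonal hA.eigenvectorUnitary hA.eigenvalues := by
        rw [unitaryDiagonal_eigenvalues]
    _ = unitaryDiagonal hA.eigenvectorUnitary hA.eigenvalues := by
        simp only [supportProj, unitaryDiagonal_mul_unitaryDiagonal, hdiag]
    _ = A := unitaryDiagonal_eigenvalues hA

lemma trace_supportProj (hA : A.IsHermitian) : (supportProj hA).trace = A.rank := by
  rw [supportProj, trace_unitaryDiagonal, hA.rank_eq_card_non_zero_eigs, Fintype.card_subtype]
  simp [apply_ite, Finset.sum_ite]

theorem re_trace_le_rank_mul_add_traceDist {σ : Matrix κ κ ℂ} (hσ : σ.IsHermitian)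
    (U : unitaryGroup κ ℂ) (q : κ → ℝ) {ε : ℝ} (hε : 0 ≤ ε) :
    σ.trace.re ≤
      σ.rank * ε + ∑ x with ε < q x, q x + traceDist σ (unitaryDiagonal U q) := by
  have hP := isEffect_supportProj hσ
  have hdist := hP.re_trace_mul_sub_le_traceDist hσ (isHermitian_unitaryDiagonal U q)
  have hcapture := hP.re_trace_mul_unitaryDiagonal_le U q hε
  rw [trace_supportProj, Complex.natCast_re] at hcapture
  rw [supportProj_mul] at hdist
  linarith

end Effect

section KroneckerPower

variable {ι : Type*}

lemma kronPow_mul [Fintype ι] (A B : Matrix ι ι ℂ) (n : ℕ) :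
    kronPow (A * B) n = kronPow A n * kronPow B n := by
  ext i j
  simp only [kronPow, of_apply, mul_apply, ← Finset.prod_mul_distrib]
  rw [Finset.prod_univ_sum, Fintype.piFinset_univ]

lemma kronPow_star (A : Matrix ι ι ℂ) (n : ℕ) : kronPow (star A) n = star (kronPow A n) := by
  ext i j
  simp [kronPow, star_apply]

lemma kronPow_diagonal [DecidableEq ι] (d : ι → ℂ) (n : ℕ) :
    kronPow (diagonal d) n = diagonal fun x => ∏ k, d (x k) := by
  ext i j
  simp only [kronPow, of_apply, diagonal_apply]
  split_ifs with h
  · simp only [h, if_true]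
  · obtain ⟨k, hk⟩ := Function.ne_iff.mp h
    exact Finset.prod_eq_zero (Finset.mem_univ k) (if_neg hk)

lemma kronPow_one [DecidableEq ι] (n : ℕ) : kronPow (1 : Matrix ι ι ℂ) n = 1 := by
  simp only [← diagonal_one, kronPow_diagonal, Finset.prod_const_one]

variable [Fintype ι] [DecidableEq ι]

lemma kronPow_mem_unitaryGroup {U : Matrix ι ι ℂ} (hU : U ∈ unitaryGroup ι ℂ) (n : ℕ) :
    kronPow U n ∈ unitaryGroup (Fin n → ι) ℂ := by
  rw [mem_unitaryGroup_iff, ← kronPow_star, ← kronPow_mul, mem_unitaryGroup_iff.mp hU, kronPow_one]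

lemma kronPow_unitaryDiagonal (U : unitaryGroup ι ℂ) (d : ι → ℝ) (n : ℕ) :
    kronPow (unitaryDiagonal U d) n =
      unitaryDiagonal ⟨kronPow (U : Matrix ι ι ℂ) n, kronPow_mem_unitaryGroup U.2 n⟩
        fun x => ∏ k, d (x k) := by
  rw [unitaryDiagonal, conjStarAlgAut_apply, kronPow_mul, kronPow_mul, kronPow_diagonal,
    kronPow_star, unitaryDiagonal, conjStarAlgAut_apply]
  simp only [Complex.ofReal_prod]

end KroneckerPower

section DensityMatrix

variable {ι : Type*} [Fintype ι] [DecidableEq ι] {ρ : Matrix ι ι ℂ}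

lemma IsDensity.sum_eigenvalues (hρ : IsDensity ρ) :
    ∑ i, hρ.1.isHermitian.eigenvalues i = 1 := by
  have h : ((∑ i, hρ.1.isHermitian.eigenvalues i : ℝ) : ℂ) = 1 := by
    rw [Complex.ofReal_sum]
    exact hρ.1.isHermitian.trace_eq_sum_eigenvalues.symm.trans hρ.2
  exact_mod_cast h

theorem rank_lower_bound_of_close_to_kronPow_general (hρ : IsDensity ρ) (t : ℝ) :
    ∃ δ < 1, ∃ C > 0, ∀ᶠ n : ℕ in atTop,
      ∀ σ : Matrix (Fin n → ι) (Fin n → ι) ℂ, σ.IsHermitian → σ.trace = 1 →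
        traceDist σ (kronPow ρ n) ≤ 2 * (1 - δ) →
        C * (2 : ℝ) ^ (n * shannonEntropy hρ.1.isHermitian.eigenvalues +
          t * surprisalStdDev hρ.1.isHermitian.eigenvalues * √n) < σ.rank := by
  set p := hρ.1.isHermitian.eigenvalues
  have hp_sum : ∑ i, p i = 1 := hρ.sum_eigenvalues
  obtain ⟨c, hc, hev⟩ :=
    exists_pos_eventually_le_sum_prod_le_two_rpow hρ.1.eigenvalues_nonneg hp_sum t
  refine ⟨1 - c / 4, by linarith, c / 4, by linarith, hev.mono fun n hn σ hσ hσ_tr hdist => ?_⟩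
  set s : ℝ := n * shannonEntropy p + t * surprisalStdDev p * √n
  set q : (Fin n → ι) → ℝ := fun x => ∏ k, p (x k)
  have hq_sum : ∑ x, q x = 1 := by
    simp [q, ← Fintype.piFinset_univ, ← Finset.prod_univ_sum, hp_sum]
  have hsplit : ∑ x with q x ≤ 2 ^ (-s), q x + ∑ x with 2 ^ (-s) < q x, q x = 1 := by
    simpa only [not_le, hq_sum] using
      Finset.sum_filter_add_sum_filter_not Finset.univ (fun x => q x ≤ 2 ^ (-s)) q
  have hrank : 1 ≤ σ.rank * (2 : ℝ) ^ (-s) + ∑ x with 2 ^ (-s) < q x, q x +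
      traceDist σ (kronPow ρ n) := by
    rw [← unitaryDiagonal_eigenvalues hρ.1.isHermitian, kronPow_unitaryDiagonal]
    simpa only [hσ_tr, Complex.one_re] using
      re_trace_le_rank_mul_add_traceDist hσ _ q (ε := 2 ^ (-s)) (by positivity)
  have hlt : c / 4 < σ.rank * (2 : ℝ) ^ (-s) := by linarith
  rwa [Real.rpow_neg two_pos.le, ← div_eq_mul_inv, lt_div_iff₀ (by positivity)] at hlt

end DensityMatrix

/-- any density matrix `σ` within trace distance `2(1−δ)` of `ρ^{⊗n}` has rank
greater than `C · 2^{nE + α√n}`, for suitable constants `δ < 1`, `C > 0`, `n₀` and all `n ≥ n₀`. -/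
theorem rank_lower_bound_of_close_to_kronPow {ι : Type*} [Fintype ι] [DecidableEq ι] [Nonempty ι]
    (ρ : Matrix ι ι ℂ) (hρ : IsDensity ρ)
    (E α β : ℝ)
    (hE : E = -∑ i, hρ.1.isHermitian.eigenvalues i *
        Real.logb 2 (hρ.1.isHermitian.eigenvalues i))
    (hα : α = Real.sqrt (∑ i, hρ.1.isHermitian.eigenvalues i *
        (Real.logb 2 (hρ.1.isHermitian.eigenvalues i) + E) ^ 2))
    (hβ : β = ∑ i, hρ.1.isHermitian.eigenvalues i *
        |Real.logb 2 (hρ.1.isHermitian.eigenvalues i) + E| ^ 3)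
    (hαpos : 0 < α) :
    ∃ δ C : ℝ, ∃ n₀ : ℕ, δ < 1 ∧ 0 < C ∧
      ∀ n : ℕ, n₀ ≤ n →
        ∀ σ : Matrix (Fin n → ι) (Fin n → ι) ℂ, IsDensity σ →
          traceDist σ (kronPow ρ n) ≤ 2 * (1 - δ) →
          C * (2 : ℝ) ^ ((n : ℝ) * E + α * Real.sqrt n) < (σ.rank : ℝ) := by
  obtain ⟨δ, hδ, C, hC, hev⟩ := rank_lower_bound_of_close_to_kronPow_general hρ 1
  obtain ⟨n₀, hn₀⟩ := eventually_atTop.mp hev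
  subst hE hα
  refine ⟨δ, C, n₀, hδ, hC, fun n hn σ hσ hdist => ?_⟩
  simpa only [one_mul, shannonEntropy, surprisalStdDev] using
    hn₀ n hn σ hσ.1.isHermitian hσ.2 hdist
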